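/- Assume that π : X̂ → X is a covering map, that X is compact, and that θ is a continuous equivariant function on X̂. Let ĝ ∈ Ĝ, let g = p(ĝ), and let μ be a g-invariant Borel probability measure on X. If the mean translation number rot_μ(ĝ) = ∫_X ρ_x(ĝ) dμ(x) is non-zero, then ĝ is undistorted in Ĝ: for every finitely generated subgroup Γ of Ĝ containing ĝ and every finite symmetric generating set S of Γ, lim_{n→∞} |ĝⁿ|_S / n > 0. -/

import Mathlib

open Function Filter Topology MeasureTheory

/-- The setting: a principal `A`-bundle-like structure, where `A` is an additive
subgroup of `ℝ` (intended to be `ℤ` or `ℝ` with the discrete topology).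
`π : Xh → X` is a continuous surjection, `A` acts on `Xh` by homeomorphisms
`T r` commuting with `π`, and the action is free and transitive on each fiber. -/
structure BundleSetting (A : AddSubgroup ℝ) (Xh X : Type*)
    [TopologicalSpace Xh] [TopologicalSpace X] where
  π : Xh → X
  hπ_cont : Continuous π
  hπ_surj : Function.Surjective π
  T : A → Xh ≃ₜ Xh
  hT_add : ∀ (r s : A) (xh : Xh), T (r + s) xh = T r (T s xh)
  hT_π : ∀ (r : A) (xh : Xh), π (T r xh) = π xh
  hT_transfree : ∀ xh yh : Xh, π xh = π yh → ∃! r : A, T r xh = yh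

/-- `A` is either `ℤ` (the subgroup of `ℝ` generated by `1`) or all of `ℝ`. -/
def IsIntOrReal (A : AddSubgroup ℝ) : Prop :=
  A = AddSubgroup.zmultiples (1 : ℝ) ∨ A = ⊤

variable {A : AddSubgroup ℝ} {Xh X : Type*} [TopologicalSpace Xh] [TopologicalSpace X]

/-- A function `θ : Xh → ℝ` is equivariant if `θ (T r xh) = θ xh + r`. -/
def BundleSetting.Equivariant (B : BundleSetting A Xh X) (θ : Xh → ℝ) : Prop :=
  ∀ (r : A) (xh : Xh), θ (B.T r xh) = θ xh + (r : ℝ)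

/-- `gh` is a bundle automorphism covering the homeomorphism `g` of the base. -/
def BundleSetting.IsAuto (B : BundleSetting A Xh X) (gh : Xh ≃ₜ Xh) (g : X ≃ₜ X) : Prop :=
  (∀ (r : A) (xh : Xh), gh (B.T r xh) = B.T r (gh xh)) ∧
  (∀ xh : Xh, B.π (gh xh) = g (B.π xh))

/-- `ρ_x(f) = θ (f xh) - θ xh` for a chosen lift `xh` of `x` (independent of the
choice of lift when `θ` is equivariant and `f` commutes with the `A`-action). -/
noncomputable def BundleSetting.ρ (B : BundleSetting A Xh X) (θ : Xh → ℝ)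
    (f : Xh → Xh) (x : X) : ℝ :=
  θ (f (Function.surjInv B.hπ_surj x)) - θ (Function.surjInv B.hπ_surj x)

/-- The group structure on self-homeomorphisms, with `f * g = f ∘ g`. -/
instance : Group (Xh ≃ₜ Xh) where
  mul f g := g.trans f
  one := Homeomorph.refl Xh
  inv := Homeomorph.symm
  mul_assoc a b c := by ext x; rfl
  one_mul a := by ext x; rfl
  mul_one a := by ext x; rfl
  inv_mul_cancel a := by ext x; exact a.symm_apply_apply x

/-- The word norm of `γ` with respect to a generating set `S`: the least length of
a word in elements of `S` whose product is `γ`. -/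
noncomputable def wordNorm {G : Type*} [Group G] (S : Finset G) (γ : G) : ℕ :=
  sInf {l : ℕ | ∃ w : List G, w.length = l ∧ (∀ s ∈ w, s ∈ S) ∧ w.prod = γ}

/-!
The function `x ↦ ρ_x(f)` is continuous for every bundle automorphism `f`: it pulls back under `π`
to `θ ∘ f - θ`, and a surjective covering map is a quotient map. As `X` is compact, it is bounded,
so finitely many generators share a bound `C`. The cocycle identity
`ρ_x(f h) = ρ_{h₀ x}(f) + ρ_x(h)`, where `h` covers `h₀`, shows that a word of length `l` has
`|ρ_x| ≤ C l`, whereas integrating it against the invariant measure gives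
`∫ ρ_x(ĝⁿ) dμ = n rot_μ(ĝ)`. Hence `n |rot_μ(ĝ)| ≤ C |ĝⁿ|`. The limit of `|ĝⁿ| / n` exists by
Fekete's lemma, and it is at least `|rot_μ(ĝ)| / C > 0`.
-/

/-- Independence of `ρ` from the choice of the lift. -/
lemma BundleSetting.ρ_π (B : BundleSetting A Xh X) {θ : Xh → ℝ} (hθ : B.Equivariant θ)
    {f : Xh ≃ₜ Xh} {f0 : X ≃ₜ X} (hf : B.IsAuto f f0) (xh : Xh) :
    B.ρ θ f (B.π xh) = θ (f xh) - θ xh := by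
  obtain ⟨r, hr, -⟩ := B.hT_transfree xh (Function.surjInv B.hπ_surj (B.π xh))
    (Function.surjInv_eq B.hπ_surj (B.π xh)).symm
  unfold BundleSetting.ρ
  rw [← hr, hf.1, hθ, hθ]
  ring

lemma BundleSetting.continuous_ρ (B : BundleSetting A Xh X) (hcov : IsCoveringMap B.π)
    {θ : Xh → ℝ} (hc : Continuous θ) (hθ : B.Equivariant θ)
    {f : Xh ≃ₜ Xh} {f0 : X ≃ₜ X} (hf : B.IsAuto f f0) : Continuous (B.ρ θ f) := by
  rw [(hcov.isQuotientMap B.hπ_surj).continuous_iff]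
  have h : B.ρ θ f ∘ B.π = fun xh => θ (f xh) - θ xh := funext (B.ρ_π hθ hf)
  rw [h]
  exact (hc.comp f.continuous).sub hc

lemma BundleSetting.IsAuto.mul {B : BundleSetting A Xh X} {f h : Xh ≃ₜ Xh} {f0 h0 : X ≃ₜ X}
    (hf : B.IsAuto f f0) (hh : B.IsAuto h h0) : B.IsAuto (f * h) (f0 * h0) := by
  refine ⟨fun r xh => ?_, fun xh => ?_⟩
  · change f (h _) = B.T r (f (h xh))
    rw [hh.1, hf.1]
  · change B.π (f (h xh)) = f0 (h0 (B.π xh))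
    rw [hf.2, hh.2]

lemma BundleSetting.isAuto_one (B : BundleSetting A Xh X) : B.IsAuto 1 1 :=
  ⟨fun _ _ => rfl, fun _ => rfl⟩

lemma BundleSetting.IsAuto.pow {B : BundleSetting A Xh X} {f : Xh ≃ₜ Xh} {f0 : X ≃ₜ X}
    (hf : B.IsAuto f f0) (n : ℕ) : B.IsAuto (f ^ n) (f0 ^ n) := by
  induction n with
  | zero => simpa only [pow_zero] using B.isAuto_one
  | succ n ih => simpa only [pow_succ] using ih.mul hf

lemma BundleSetting.ρ_one (B : BundleSetting A Xh X) (θ : Xh → ℝ) (x : X) :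
    B.ρ θ (1 : Xh ≃ₜ Xh) x = 0 :=
  sub_self _

/-- The cocycle identity. -/
lemma BundleSetting.ρ_mul (B : BundleSetting A Xh X) {θ : Xh → ℝ} (hθ : B.Equivariant θ)
    {f h : Xh ≃ₜ Xh} {f0 h0 : X ≃ₜ X} (hf : B.IsAuto f f0) (hh : B.IsAuto h h0) (x : X) :
    B.ρ θ (f * h : Xh ≃ₜ Xh) x = B.ρ θ f (h0 x) + B.ρ θ h x := by
  obtain ⟨xh, rfl⟩ := B.hπ_surj x
  rw [B.ρ_π hθ (hf.mul hh), ← hh.2, B.ρ_π hθ hf, B.ρ_π hθ hh]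
  change θ (f (h xh)) - _ = _
  ring

lemma BundleSetting.exists_bound_ρ (B : BundleSetting A Xh X) (hcov : IsCoveringMap B.π)
    [CompactSpace X] {θ : Xh → ℝ} (hc : Continuous θ) (hθ : B.Equivariant θ)
    {f : Xh ≃ₜ Xh} {f0 : X ≃ₜ X} (hf : B.IsAuto f f0) : ∃ C : ℝ, ∀ x, |B.ρ θ f x| ≤ C := by
  obtain ⟨C, hC⟩ := isCompact_univ.exists_bound_of_continuousOn
    (B.continuous_ρ hcov hc hθ hf).continuousOn
  exact ⟨C, fun x => hC x (Set.mem_univ x)⟩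

lemma BundleSetting.integrable_ρ (B : BundleSetting A Xh X) (hcov : IsCoveringMap B.π)
    [CompactSpace X] {θ : Xh → ℝ} (hc : Continuous θ) (hθ : B.Equivariant θ)
    {f : Xh ≃ₜ Xh} {f0 : X ≃ₜ X} (hf : B.IsAuto f f0)
    [MeasurableSpace X] [BorelSpace X] (μ : Measure X) [IsProbabilityMeasure μ] :
    Integrable (B.ρ θ f) μ := by
  obtain ⟨C, hC⟩ := B.exists_bound_ρ hcov hc hθ hf
  exact Integrable.of_bound
    (B.continuous_ρ hcov hc hθ hf).measurable.aestronglyMeasurable C (ae_of_all _ hC)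

/-- The mean translation number is homogeneous along the powers of an automorphism. -/
lemma BundleSetting.integral_ρ_pow (B : BundleSetting A Xh X) (hcov : IsCoveringMap B.π)
    [CompactSpace X] {θ : Xh → ℝ} (hc : Continuous θ) (hθ : B.Equivariant θ)
    {f : Xh ≃ₜ Xh} {f0 : X ≃ₜ X} (hf : B.IsAuto f f0)
    [MeasurableSpace X] [BorelSpace X] (μ : Measure X) [IsProbabilityMeasure μ]
    (hμ : MeasurePreserving f0 μ μ) (n : ℕ) :
    ∫ x, B.ρ θ (f ^ n : Xh ≃ₜ Xh) x ∂μ = n * ∫ x, B.ρ θ f x ∂μ := by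
  induction n with
  | zero => simp only [pow_zero, B.ρ_one, integral_zero, Nat.cast_zero, zero_mul]
  | succ n ih =>
    have hi := B.integrable_ρ hcov hc hθ (hf.pow n) μ
    simp only [pow_succ, B.ρ_mul hθ (hf.pow n) hf]
    rw [integral_add
      (f := fun x => B.ρ θ (f ^ n : Xh ≃ₜ Xh) (f0 x))
      (hμ.integrable_comp_of_integrable hi) (B.integrable_ρ hcov hc hθ hf μ),
      hμ.integral_comp f0.measurableEmbedding, ih]
    push_cast
    ring

/-- A uniform bound on the generators gives a linear bound on words. -/
lemma BundleSetting.abs_ρ_prod_le (B : BundleSetting A Xh X) {θ : Xh → ℝ}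
    (hθ : B.Equivariant θ) {C : ℝ} (w : List (Xh ≃ₜ Xh))
    (hw : ∀ s ∈ w, (∃ s0, B.IsAuto s s0) ∧ ∀ x, |B.ρ θ s x| ≤ C) :
    (∃ p0, B.IsAuto w.prod p0) ∧ ∀ x, |B.ρ θ w.prod x| ≤ C * w.length := by
  induction w with
  | nil => exact ⟨⟨1, B.isAuto_one⟩, fun x => by
      rw [List.prod_nil, B.ρ_one]; simp⟩
  | cons s w ih =>
    obtain ⟨⟨s0, hs0⟩, hs⟩ := hw s List.mem_cons_self
    obtain ⟨⟨p0, hp0⟩, hp⟩ := ih fun t ht => hw t (List.mem_cons_of_mem _ ht)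
    rw [List.prod_cons]
    refine ⟨⟨_, hs0.mul hp0⟩, fun x => ?_⟩
    rw [B.ρ_mul hθ hs0 hp0, List.length_cons]
    push_cast
    linarith [abs_add_le (B.ρ θ s (p0 x)) (B.ρ θ w.prod x), hs (p0 x), hp x]

/-- The word norm is attained: without this the infimum could be that of the empty set. -/
lemma exists_word {G : Type*} [Group G] (S : Finset G) (hS : ∀ s ∈ S, s⁻¹ ∈ S) {γ : G}
    (hγ : γ ∈ Subgroup.closure (S : Set G)) :
    ∃ w : List G, w.length = wordNorm S γ ∧ (∀ s ∈ w, s ∈ S) ∧ w.prod = γ := by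
  rw [← Subgroup.mem_toSubmonoid, Subgroup.closure_toSubmonoid] at hγ
  obtain ⟨w, hw, hp⟩ := Submonoid.exists_list_of_mem_closure hγ
  refine Nat.sInf_mem (s := {l : ℕ | ∃ w : List G, w.length = l ∧ (∀ s ∈ w, s ∈ S) ∧ w.prod = γ})
    ⟨w.length, w, rfl, fun s hs => ?_, hp⟩
  rcases hw s hs with h | h
  · exact h
  · simpa using hS _ h

lemma wordNorm_mul_le {G : Type*} [Group G] (S : Finset G) (hS : ∀ s ∈ S, s⁻¹ ∈ S) {γ δ : G}
    (hγ : γ ∈ Subgroup.closure (S : Set G)) (hδ : δ ∈ Subgroup.closure (S : Set G)) :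
    wordNorm S (γ * δ) ≤ wordNorm S γ + wordNorm S δ := by
  obtain ⟨v, hv, hvS, hvp⟩ := exists_word S hS hγ
  obtain ⟨w, hw, hwS, hwp⟩ := exists_word S hS hδ
  refine Nat.sInf_le ⟨v ++ w, by rw [List.length_append, hv, hw], fun s hs => ?_, ?_⟩
  · exact (List.mem_append.1 hs).elim (hvS s) (hwS s)
  · rw [List.prod_append, hvp, hwp]

/-- over a compact base with a continuous equivariant θ, a bundle
automorphism with non-zero mean translation number (with respect to an invariant
Borel probability measure) is undistorted in the group of bundle automorphisms. -/
theorem stmt15 (hA : IsIntOrReal A) (B : BundleSetting A Xh X)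
    (hcov : IsCoveringMap B.π) [CompactSpace X]
    (θ : Xh → ℝ) (hc : Continuous θ) (hθ : B.Equivariant θ)
    (gh : Xh ≃ₜ Xh) (g : X ≃ₜ X) (hgh : B.IsAuto gh g)
    [MeasurableSpace X] [BorelSpace X] (μ : Measure X) [IsProbabilityMeasure μ]
    (hμ : MeasurePreserving (⇑g) μ μ)
    (hrot : ∫ y, B.ρ θ ⇑gh y ∂μ ≠ 0)
    (Γ : Subgroup (Xh ≃ₜ Xh)) (hΓ : ∀ f ∈ Γ, ∃ f0 : X ≃ₜ X, B.IsAuto f f0)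
    (hghΓ : gh ∈ Γ) (S : Finset (Xh ≃ₜ Xh)) (hSΓ : (S : Set (Xh ≃ₜ Xh)) ⊆ (Γ : Set (Xh ≃ₜ Xh)))
    (hSsymm : ∀ s ∈ S, s⁻¹ ∈ S) (hSgen : Subgroup.closure (S : Set (Xh ≃ₜ Xh)) = Γ) :
    ∃ τ : ℝ, 0 < τ ∧ Tendsto (fun n : ℕ => (wordNorm S (gh ^ n) : ℝ) / n) atTop (𝓝 τ) := by
  have hpow : ∀ n : ℕ, gh ^ n ∈ Subgroup.closure (S : Set (Xh ≃ₜ Xh)) := fun n =>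
    hSgen ▸ Γ.pow_mem hghΓ n
  have hauto : ∀ s ∈ S, ∃ s0, B.IsAuto s s0 := fun s hs => hΓ s (hSΓ hs)
  obtain ⟨C, hC0, hC⟩ : ∃ C : ℝ, 0 < C ∧ ∀ s ∈ S, ∀ x, |B.ρ θ s x| ≤ C := by
    have hb : ∀ s : Xh ≃ₜ Xh, ∃ c : ℝ, s ∈ S → ∀ x, |B.ρ θ s x| ≤ c := by
      intro s
      by_cases hs : s ∈ S
      · obtain ⟨s0, hs0⟩ := hauto s hs
        obtain ⟨c, hc'⟩ := B.exists_bound_ρ hcov hc hθ hs0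
        exact ⟨c, fun _ => hc'⟩
      · exact ⟨0, fun h => absurd h hs⟩
    choose c hc' using hb
    refine ⟨∑ s ∈ S, |c s| + 1, by positivity, fun s hs x => ?_⟩
    have h1 := Finset.single_le_sum (f := fun s => |c s|) (fun i _ => abs_nonneg _) hs
    linarith [hc' s hs x, le_abs_self (c s)]
  have hlow : ∀ n : ℕ, n * |∫ y, B.ρ θ gh y ∂μ| ≤ C * wordNorm S (gh ^ n) := by
    intro n
    obtain ⟨w, hw, hwS, hwp⟩ := exists_word S hSsymm (hpow n)
    have hb := (B.abs_ρ_prod_le hθ w fun s hs => ⟨hauto s (hwS s hs), hC s (hwS s hs)⟩).2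
    rw [hwp, hw] at hb
    have h := norm_integral_le_of_norm_le_const (μ := μ)
      (f := B.ρ θ (gh ^ n : Xh ≃ₜ Xh))
      (ae_of_all μ hb)
    rw [B.integral_ρ_pow hcov hc hθ hgh μ hμ n] at h
    simpa [abs_mul] using h
  have hsub : Subadditive fun n : ℕ => (wordNorm S (gh ^ n) : ℝ) := by
    intro m n
    have h := wordNorm_mul_le S hSsymm (hpow m) (hpow n)
    rw [← pow_add] at h
    change (wordNorm S (gh ^ (m + n)) : ℝ) ≤ wordNorm S (gh ^ m) + wordNorm S (gh ^ n)
    exact_mod_cast h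
  have hlim := hsub.tendsto_lim ⟨0, by
    rintro _ ⟨n, rfl⟩
    positivity⟩
  refine ⟨_, (div_pos (abs_pos.2 hrot) hC0).trans_le (ge_of_tendsto hlim ?_), hlim⟩
  filter_upwards [eventually_gt_atTop 0] with n hn
  have hn' : (0 : ℝ) < n := by exact_mod_cast hn
  rw [div_le_div_iff₀ hC0 hn']
  linarith [hlow n]
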